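/- arXiv:2605.23333 — 5 statements merged into one kernel-verified Lean document; each statement's English description precedes it below -/
import Mathlib

section
/- Fix m ≥ 1 and section data (l_j, vmin_j, vmax_j, τ_j) for j = 0,…,m−1 with l_j > 0, 0 < vmin_j ≤ vmax_j, τ_j > 0, and vmin_j·τ_j ≤ l_j ≤ vmax_j·τ_j; set L_j = Σ_{ℓ<j} l_ℓ and T_j = t_e + Σ_{ℓ<j} τ_ℓ for an entry time t_e ∈ ℝ. Let x : ℝ → ℝ be differentiable on [T_0, T_m] with x(T_j) = L_j for all j = 0,…,m and vmin_j ≤ x′(t) ≤ vmax_j for all t ∈ [T_j, T_{j+1}] and all j = 0,…,m−1. Then for every j = 0,…,m−1 and every t ∈ [T_j, T_{j+1}]: max(L_j + vmin_j·(t − T_j), L_{j+1} − vmax_j·(T_{j+1} − t)) ≤ x(t) ≤ min(L_j + vmax_j·(t − T_j), L_{j+1} − vmin_j·(T_{j+1} − t)). In other words, every admissible trajectory lies between the lower-bound trajectory x̌ and the upper-bound trajectory x̂. -/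
/-!
Applying the mean value theorem on a subinterval `[a, b]` of section `j` bounds the displacement
`x b - x a` between `vmin j * (b - a)` and `vmax j * (b - a)`. Taking `[a, b] = [T j, t]` and
`[a, b] = [t, T (j + 1)]`, where `x` is known at the outer endpoint, gives the four inequalities.
-/

/-- Mean value bounds for a derivative taken within a larger interval `[A, B]`. -/
theorem displacement_bounds {x x' : ℝ → ℝ} {A B a b c d : ℝ}
    (hd : ∀ t ∈ Set.Icc A B, HasDerivWithinAt x (x' t) (Set.Icc A B) t)
    (hA : A ≤ a) (hab : a ≤ b) (hB : b ≤ B)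
    (hs : ∀ t ∈ Set.Icc a b, c ≤ x' t ∧ x' t ≤ d) :
    c * (b - a) ≤ x b - x a ∧ x b - x a ≤ d * (b - a) := by
  rcases hab.eq_or_lt with rfl | hlt
  · simp
  · have hcont : ContinuousOn x (Set.Icc a b) := fun t ht =>
      ((hd t ⟨hA.trans ht.1, ht.2.trans hB⟩).continuousWithinAt).mono (Set.Icc_subset_Icc hA hB)
    obtain ⟨t, ht, he⟩ := exists_hasDerivAt_eq_slope x x' hlt hcont fun t ht =>
      (hd t ⟨hA.trans ht.1.le, ht.2.le.trans hB⟩).hasDerivAt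
        (Icc_mem_nhds (hA.trans_lt ht.1) (ht.2.trans_le hB))
    have hpos : 0 < b - a := sub_pos.2 hlt
    have hst := hs t (Set.Ioo_subset_Icc_self ht)
    rw [he, le_div_iff₀ hpos, div_le_iff₀ hpos] at hst
    exact hst

/-- Theorem 1 of the paper: In an `m`-section corridor, every
admissible trajectory (differentiable on `[T_0, T_m]`, meeting every waypoint
on schedule, and obeying each section's speed limits) lies between the
lower-bound trajectory `x̌` and the upper-bound trajectory `x̂`:
for every section `j` and `t ∈ [T_j, T_{j+1}]`,
`max(L_j + vmin_j·(t − T_j), L_{j+1} − vmax_j·(T_{j+1} − t)) ≤ x(t)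
  ≤ min(L_j + vmax_j·(t − T_j), L_{j+1} − vmin_j·(T_{j+1} − t))`. -/
theorem admissible_trajectory_between_bounds
    (m : ℕ) (hm : 1 ≤ m) (l vmin vmax τ : ℕ → ℝ)
    (hl : ∀ j < m, 0 < l j)
    (hvmin : ∀ j < m, 0 < vmin j) (hvv : ∀ j < m, vmin j ≤ vmax j)
    (hτ : ∀ j < m, 0 < τ j)
    (hlo : ∀ j < m, vmin j * τ j ≤ l j) (hhi : ∀ j < m, l j ≤ vmax j * τ j)
    (te : ℝ)
    (L : ℕ → ℝ) (hL : ∀ j, L j = ∑ ℓ ∈ Finset.range j, l ℓ)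
    (T : ℕ → ℝ) (hT : ∀ j, T j = te + ∑ ℓ ∈ Finset.range j, τ ℓ)
    (x x' : ℝ → ℝ)
    (hderiv : ∀ t ∈ Set.Icc (T 0) (T m),
      HasDerivWithinAt x (x' t) (Set.Icc (T 0) (T m)) t)
    (hwp : ∀ j ≤ m, x (T j) = L j)
    (hspeed : ∀ j < m, ∀ t ∈ Set.Icc (T j) (T (j + 1)),
      vmin j ≤ x' t ∧ x' t ≤ vmax j) :
    ∀ j < m, ∀ t ∈ Set.Icc (T j) (T (j + 1)),
      max (L j + vmin j * (t - T j)) (L (j + 1) - vmax j * (T (j + 1) - t)) ≤ x t ∧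
      x t ≤ min (L j + vmax j * (t - T j)) (L (j + 1) - vmin j * (T (j + 1) - t)) := by
  intro j hj t ht
  have hmono : ∀ i k, i ≤ k → k ≤ m → T i ≤ T k := by
    intro i k hik hkm
    rw [hT, hT]
    refine add_le_add le_rfl ?_
    refine Finset.sum_le_sum_of_subset_of_nonneg (Finset.range_mono hik) fun n hn _ => ?_
    exact (hτ n ((Finset.mem_range.1 hn).trans_le hkm)).le
  have h0 : T 0 ≤ T j := hmono 0 j (Nat.zero_le j) hj.le
  have h1 : T (j + 1) ≤ T m := hmono (j + 1) m hj le_rfl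
  have hleft := displacement_bounds hderiv h0 ht.1 (ht.2.trans h1)
    fun s hs => hspeed j hj s ⟨hs.1, hs.2.trans ht.2⟩
  have hright := displacement_bounds hderiv (h0.trans ht.1) ht.2 h1
    fun s hs => hspeed j hj s ⟨ht.1.trans hs.1, hs.2⟩
  rw [hwp j hj.le] at hleft
  rw [hwp (j + 1) hj] at hright
  refine ⟨max_le ?_ ?_, le_min ?_ ?_⟩
  all_goals linarith [hleft.1, hleft.2, hright.1, hright.2]
end

section
/- Let L, l, T, τ, vmin, vmax be real numbers with 0 < vmin ≤ vmax, τ > 0, and vmin·τ ≤ l ≤ vmax·τ, and define x̌(t) = max(L + vmin·(t − T), L + l − vmax·(T + τ − t)) for t ∈ [T, T + τ]. Then for all s, t with T ≤ s ≤ t ≤ T + τ: vmin·(t − s) ≤ x̌(t) − x̌(s) ≤ vmax·(t − s). In particular, x̌ itself respects the section speed limits, so the lower bound is attained by an admissible speed profile. -/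
/-- The lower-bound trajectory
`x̌(t) = max(L + vmin·(t − T), L + l − vmax·(T + τ − t))` itself respects the
section speed limits: for `T ≤ s ≤ t ≤ T + τ`,
`vmin·(t − s) ≤ x̌(t) − x̌(s) ≤ vmax·(t − s)`. -/
theorem lower_bound_trajectory_respects_speed_limits
    (L l T τ vmin vmax : ℝ)
    (hvmin : 0 < vmin) (hvv : vmin ≤ vmax) (hτ : 0 < τ)
    (hlo : vmin * τ ≤ l) (hhi : l ≤ vmax * τ) :
    ∀ s t : ℝ, T ≤ s → s ≤ t → t ≤ T + τ →
      vmin * (t - s) ≤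
        max (L + vmin * (t - T)) (L + l - vmax * (T + τ - t)) -
          max (L + vmin * (s - T)) (L + l - vmax * (T + τ - s)) ∧
      max (L + vmin * (t - T)) (L + l - vmax * (T + τ - t)) -
          max (L + vmin * (s - T)) (L + l - vmax * (T + τ - s)) ≤
        vmax * (t - s) := by
  intro s t _ hst _
  -- Both affine branches have slope in `[vmin, vmax]`: over `[s, t]` each increment lies between
  -- `vmin * (t - s)` and `vmax * (t - s)`, and taking the maximum preserves these bounds.
  have hd : vmin * (t - s) ≤ vmax * (t - s) :=
    mul_le_mul_of_nonneg_right hvv (sub_nonneg.mpr hst)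
  constructor
  · rw [le_sub_iff_add_le, ← le_sub_iff_add_le']
    refine max_le ?_ ?_
    · linarith [le_max_left (L + vmin * (t - T)) (L + l - vmax * (T + τ - t))]
    · linarith [le_max_right (L + vmin * (t - T)) (L + l - vmax * (T + τ - t))]
  · rw [sub_le_iff_le_add]
    refine max_le ?_ ?_
    · linarith [le_max_left (L + vmin * (s - T)) (L + l - vmax * (T + τ - s))]
    · linarith [le_max_right (L + vmin * (s - T)) (L + l - vmax * (T + τ - s))]
end

section
/- Let L, l, T, τ, vmin, vmax be real numbers with 0 < vmin ≤ vmax, τ > 0, and vmin·τ ≤ l ≤ vmax·τ, and define x̂(t) = min(L + vmax·(t − T), L + l − vmin·(T + τ − t)) for t ∈ [T, T + τ]. Then for all s, t with T ≤ s ≤ t ≤ T + τ: vmin·(t − s) ≤ x̂(t) − x̂(s) ≤ vmax·(t − s). In particular, x̂ itself respects the section speed limits, so the upper bound is attained by an admissible speed profile. -/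
/-- The upper-bound trajectory
`x̂(t) = min(L + vmax·(t − T), L + l − vmin·(T + τ − t))` itself respects the
section speed limits: for `T ≤ s ≤ t ≤ T + τ`,
`vmin·(t − s) ≤ x̂(t) − x̂(s) ≤ vmax·(t − s)`. -/
theorem upper_bound_trajectory_respects_speed_limits
    (L l T τ vmin vmax : ℝ)
    (hvmin : 0 < vmin) (hvv : vmin ≤ vmax) (hτ : 0 < τ)
    (hlo : vmin * τ ≤ l) (hhi : l ≤ vmax * τ) :
    ∀ s t : ℝ, T ≤ s → s ≤ t → t ≤ T + τ →
      vmin * (t - s) ≤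
        min (L + vmax * (t - T)) (L + l - vmin * (T + τ - t)) -
          min (L + vmax * (s - T)) (L + l - vmin * (T + τ - s)) ∧
      min (L + vmax * (t - T)) (L + l - vmin * (T + τ - t)) -
          min (L + vmax * (s - T)) (L + l - vmin * (T + τ - s)) ≤
        vmax * (t - s) := by
  intro s t _ hst _
  -- Each branch of the minimum is affine with slope `vmax` or `vmin`, so its increment over
  -- `[s, t]` lies between `vmin * (t - s)` and `vmax * (t - s)`; the minimum inherits both bounds.
  have hslope : vmin * (t - s) ≤ vmax * (t - s) :=
    mul_le_mul_of_nonneg_right hvv (sub_nonneg.mpr hst)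
  constructor
  · rw [le_sub_iff_add_le]
    apply le_min
    · linarith [min_le_left (L + vmax * (s - T)) (L + l - vmin * (T + τ - s))]
    · linarith [min_le_right (L + vmax * (s - T)) (L + l - vmin * (T + τ - s))]
  · rw [sub_le_comm]
    apply le_min
    · linarith [min_le_left (L + vmax * (t - T)) (L + l - vmin * (T + τ - t))]
    · linarith [min_le_right (L + vmax * (t - T)) (L + l - vmin * (T + τ - t))]
end

section
/- Fix m ≥ 1 and section data (l_j, vmin_j, vmax_j, τ_j) for j = 0,…,m−1 with l_j > 0, 0 < vmin_j ≤ vmax_j, τ_j > 0, and vmin_j·τ_j ≤ l_j ≤ vmax_j·τ_j. Let a leader trajectory x_i be admissible with entry time t_e (waypoint times T_{i,j}) and a follower trajectory x_{i+1} be admissible with entry time t_e + Δt for some Δt ≥ 0 (waypoint times T_{i+1,j}). Let x̌_i denote the leader's lower-bound trajectory and x̂_{i+1} the follower's upper-bound trajectory, and let safeD ≥ 0. If x̌_i(t) − x̂_{i+1}(t) ≥ safeD for all t ∈ [T_{i+1,0}, T_{i,m}], then x_i(t) − x_{i+1}(t) ≥ safeD for all t ∈ [T_{i+1,0}, T_{i,m}].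 -/
/-!
By the mean value inequality, on a section an admissible trajectory gains, between two times
`a ≤ b`, a distance between `vmin * (b - a)` and `vmax * (b - a)`. Applying this from the section's
entry waypoint to `t`, and from `t` to its exit waypoint, shows that every admissible trajectory lies
between its lower-bound and upper-bound trajectories (`section_bounds`). Since
`t ∈ [T_{i+1,0}, T_{i,m}]` lies in some section of the leader and in some section of the follower
(`exists_section`), this gives `x_i t - x_{i+1} t ≥ x̌_i t - x̂_{i+1} t ≥ safeD`.
-/

theorem increment_bounds {A B a b v w : ℝ} {f f' : ℝ → ℝ}
    (hf : ∀ t ∈ Set.Icc A B, HasDerivWithinAt f (f' t) (Set.Icc A B) t)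
    (hA : A ≤ a) (hab : a ≤ b) (hB : b ≤ B)
    (hv : ∀ t ∈ Set.Icc a b, v ≤ f' t ∧ f' t ≤ w) :
    v * (b - a) ≤ f b - f a ∧ f b - f a ≤ w * (b - a) := by
  have hsub : Set.Icc a b ⊆ Set.Icc A B := Set.Icc_subset_Icc hA hB
  have hcont : ContinuousOn f (Set.Icc a b) := fun t ht =>
    (hf t (hsub ht)).continuousWithinAt.mono hsub
  have hder : ∀ t ∈ Set.Ioo a b, HasDerivAt f (f' t) t := fun t ht =>
    (hf t (hsub (Set.Ioo_subset_Icc_self ht))).hasDerivAt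
      (Icc_mem_nhds (hA.trans_lt ht.1) (ht.2.trans_le hB))
  have hdiff : DifferentiableOn ℝ f (interior (Set.Icc a b)) := by
    rw [interior_Icc]
    exact fun t ht => (hder t ht).differentiableAt.differentiableWithinAt
  have ha : a ∈ Set.Icc a b := Set.left_mem_Icc.2 hab
  have hb : b ∈ Set.Icc a b := Set.right_mem_Icc.2 hab
  constructor
  · refine (convex_Icc a b).mul_sub_le_image_sub_of_le_deriv hcont hdiff ?_ a ha b hb hab
    intro t ht
    rw [interior_Icc] at ht
    rw [(hder t ht).deriv]
    exact (hv t (Set.Ioo_subset_Icc_self ht)).1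
  · refine (convex_Icc a b).image_sub_le_mul_sub_of_deriv_le hcont hdiff ?_ a ha b hb hab
    intro t ht
    rw [interior_Icc] at ht
    rw [(hder t ht).deriv]
    exact (hv t (Set.Ioo_subset_Icc_self ht)).2

theorem waypoint_mono {m : ℕ} {τ T : ℕ → ℝ} {s : ℝ} (hτ : ∀ j < m, 0 < τ j)
    (hT : ∀ j, T j = s + ∑ ℓ ∈ Finset.range j, τ ℓ) {j k : ℕ} (hjk : j ≤ k) (hk : k ≤ m) :
    T j ≤ T k := by
  rw [hT, hT]
  refine add_le_add_right (Finset.sum_le_sum_of_subset_of_nonneg (Finset.range_mono hjk) fun i hi _ => ?_) s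
  exact (hτ i ((Finset.mem_range.1 hi).trans_le hk)).le

theorem exists_section {T : ℕ → ℝ} {t : ℝ} {m : ℕ} (hm : 1 ≤ m)
    (h0 : T 0 ≤ t) (h1 : t ≤ T m) : ∃ j < m, t ∈ Set.Icc (T j) (T (j + 1)) := by
  induction m, hm using Nat.le_induction with
  | base => exact ⟨0, one_pos, h0, h1⟩
  | succ n hn ih =>
    rcases le_total t (T n) with h | h
    · obtain ⟨j, hj, hjt⟩ := ih h
      exact ⟨j, hj.trans n.lt_succ_self, hjt⟩
    · exact ⟨n, n.lt_succ_self, h, h1⟩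

/-- On each section, an admissible trajectory lies between its lower-bound and upper-bound
trajectories. -/
theorem section_bounds {m : ℕ} {vmin vmax τ T L : ℕ → ℝ} {s : ℝ} {x x' : ℝ → ℝ}
    (hτ : ∀ j < m, 0 < τ j) (hT : ∀ j, T j = s + ∑ ℓ ∈ Finset.range j, τ ℓ)
    (hderiv : ∀ t ∈ Set.Icc (T 0) (T m), HasDerivWithinAt x (x' t) (Set.Icc (T 0) (T m)) t)
    (hwp : ∀ j ≤ m, x (T j) = L j)
    (hspeed : ∀ j < m, ∀ t ∈ Set.Icc (T j) (T (j + 1)), vmin j ≤ x' t ∧ x' t ≤ vmax j)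
    {j : ℕ} (hj : j < m) {t : ℝ} (ht : t ∈ Set.Icc (T j) (T (j + 1))) :
    max (L j + vmin j * (t - T j)) (L (j + 1) - vmax j * (T (j + 1) - t)) ≤ x t ∧
      x t ≤ min (L j + vmax j * (t - T j)) (L (j + 1) - vmin j * (T (j + 1) - t)) := by
  have h0 : T 0 ≤ T j := waypoint_mono hτ hT j.zero_le hj.le
  have h1 : T (j + 1) ≤ T m := waypoint_mono hτ hT hj le_rfl
  have hl := increment_bounds hderiv h0 ht.1 (ht.2.trans h1)
    fun u hu => hspeed j hj u ⟨hu.1, hu.2.trans ht.2⟩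
  have hr := increment_bounds hderiv (h0.trans ht.1) ht.2 h1
    fun u hu => hspeed j hj u ⟨ht.1.trans hu.1, hu.2⟩
  rw [hwp j hj.le] at hl
  rw [hwp (j + 1) hj] at hr
  refine ⟨max_le ?_ ?_, le_min ?_ ?_⟩ <;> linarith [hl.1, hl.2, hr.1, hr.2]


/-- Lemma 2 of the paper: If the leader's lower-bound trajectory
`x̌_i` and the follower's upper-bound trajectory `x̂_{i+1}` are separated by at
least `safeD` on `[T_{i+1,0}, T_{i,m}]`, then every pair of admissible
leader/follower trajectories is separated by at least `safeD` there. -/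
theorem bound_separation_implies_trajectory_separation
    (m : ℕ) (hm : 1 ≤ m) (l vmin vmax τ : ℕ → ℝ)
    (hl : ∀ j < m, 0 < l j)
    (hvmin : ∀ j < m, 0 < vmin j) (hvv : ∀ j < m, vmin j ≤ vmax j)
    (hτ : ∀ j < m, 0 < τ j)
    (hlo : ∀ j < m, vmin j * τ j ≤ l j) (hhi : ∀ j < m, l j ≤ vmax j * τ j)
    (te Δt : ℝ) (hΔt : 0 ≤ Δt)
    (L Ti Tf : ℕ → ℝ)
    (hL : ∀ j, L j = ∑ ℓ ∈ Finset.range j, l ℓ)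
    (hTi : ∀ j, Ti j = te + ∑ ℓ ∈ Finset.range j, τ ℓ)
    (hTf : ∀ j, Tf j = (te + Δt) + ∑ ℓ ∈ Finset.range j, τ ℓ)
    -- leader trajectory, admissible with entry time te
    (xi xi' : ℝ → ℝ)
    (hderivi : ∀ t ∈ Set.Icc (Ti 0) (Ti m),
      HasDerivWithinAt xi (xi' t) (Set.Icc (Ti 0) (Ti m)) t)
    (hwpi : ∀ j ≤ m, xi (Ti j) = L j)
    (hspeedi : ∀ j < m, ∀ t ∈ Set.Icc (Ti j) (Ti (j + 1)),
      vmin j ≤ xi' t ∧ xi' t ≤ vmax j)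
    -- follower trajectory, admissible with entry time te + Δt
    (xf xf' : ℝ → ℝ)
    (hderivf : ∀ t ∈ Set.Icc (Tf 0) (Tf m),
      HasDerivWithinAt xf (xf' t) (Set.Icc (Tf 0) (Tf m)) t)
    (hwpf : ∀ j ≤ m, xf (Tf j) = L j)
    (hspeedf : ∀ j < m, ∀ t ∈ Set.Icc (Tf j) (Tf (j + 1)),
      vmin j ≤ xf' t ∧ xf' t ≤ vmax j)
    -- leader's lower-bound trajectory and follower's upper-bound trajectory
    (xcheck xhat : ℝ → ℝ)
    (hxcheck : ∀ j < m, ∀ t ∈ Set.Icc (Ti j) (Ti (j + 1)),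
      xcheck t = max (L j + vmin j * (t - Ti j)) (L (j + 1) - vmax j * (Ti (j + 1) - t)))
    (hxhat : ∀ j < m, ∀ t ∈ Set.Icc (Tf j) (Tf (j + 1)),
      xhat t = min (L j + vmax j * (t - Tf j)) (L (j + 1) - vmin j * (Tf (j + 1) - t)))
    (safeD : ℝ) (hsafeD : 0 ≤ safeD)
    (hsep : ∀ t ∈ Set.Icc (Tf 0) (Ti m), safeD ≤ xcheck t - xhat t) :
    ∀ t ∈ Set.Icc (Tf 0) (Ti m), safeD ≤ xi t - xf t := by
  intro t ht
  -- The delay `Δt ≥ 0` makes the follower's time range start and end no earlier than the leader's.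
  have hstart : Ti 0 ≤ Tf 0 := by rw [hTi, hTf]; linarith
  have hend : Ti m ≤ Tf m := by rw [hTi, hTf]; linarith
  obtain ⟨j, hj, htj⟩ := exists_section hm (hstart.trans ht.1) ht.2
  obtain ⟨k, hk, htk⟩ := exists_section hm ht.1 (ht.2.trans hend)
  have hi := (section_bounds hτ hTi hderivi hwpi hspeedi hj htj).1
  have hf := (section_bounds hτ hTf hderivf hwpf hspeedf hk htk).2
  rw [← hxcheck j hj t htj] at hi
  rw [← hxhat k hk t htk] at hf
  linarith [hsep t ht]
end

section
/- Fix m ≥ 1 and section data (l_j, vmin_j, vmax_j, τ_j) for j = 0,…,m−1 with l_j > 0, 0 < vmin_j < vmax_j, τ_j > 0, and vmin_j·τ_j ≤ l_j ≤ vmax_j·τ_j. Let t_e ∈ ℝ and 0 ≤ Δt ≤ Σ_{j<m} τ_j; let x̌_i be the lower-bound trajectory with entry time t_e, x̂_{i+1} the upper-bound trajectory with entry time t_e + Δt, and T̃ the critical-time set of the pair. Define d(t) = x̌_i(t) − x̂_{i+1}(t) on [T_{i+1,0}, T_{i,m}]. Then d is affine between consecutive critical times: for any a < b in T̃ such that no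 element of T̃ lies strictly between a and b, there exist reals α, β with d(t) = α·t + β for all t ∈ [a, b]. -/
/-!
The critical times contain every breakpoint of both trajectories that lies in the common time
interval. On `[a, b]`, since no waypoint time lies strictly inside, each vehicle stays within one
section (`exists_section`). There the leader's trajectory is a maximum, and the follower's a
minimum, of two affine functions whose difference changes sign exactly at the critical time
interior to that section. As this time is not strictly between `a` and `b` either, one of the two
affine pieces prevails on all of `[a, b]` (`max_affine`, `min_affine`), and the difference of two
affine functions is affine.
-/

/-- If the waypoints `f 0, …, f m` cover `a` and `b`, and none of them lies strictly between `a`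
and `b`, then `[a, b]` is contained in one section `[f j, f (j + 1)]`. -/
lemma exists_section_s16 (f : ℕ → ℝ) (m : ℕ) (a b : ℝ) (h0 : f 0 ≤ a) (hm : a < f m)
    (hgap : ∀ j ≤ m, ¬(a < f j ∧ f j < b)) :
    ∃ j < m, f j ≤ a ∧ b ≤ f (j + 1) := by
  classical
  have hex : ∃ n, a < f n := ⟨m, hm⟩
  have hle : Nat.find hex ≤ m := Nat.find_min' hex hm
  have hspec := Nat.find_spec hex
  obtain ⟨j, hj⟩ : ∃ j, Nat.find hex = j + 1 := by
    refine Nat.exists_eq_succ_of_ne_zero fun h => ?_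
    rw [h] at hspec
    linarith
  have hprev : ¬ a < f j := Nat.find_min hex (by omega)
  rw [hj] at hspec hle
  refine ⟨j, by omega, not_lt.1 hprev, ?_⟩
  by_contra! h
  exact hgap (j + 1) hle ⟨hspec, h⟩

/-- The maximum of two affine functions crossing at `s` is affine on any interval that does not
contain `s` in its interior. -/
lemma max_affine (p q p' q' k s a b : ℝ) (hk : 0 < k)
    (hdiff : ∀ t, (p * t + q) - (p' * t + q') = k * (s - t)) (hs : ¬(a < s ∧ s < b)) :
    ∃ α β : ℝ, ∀ t ∈ Set.Icc a b, max (p * t + q) (p' * t + q') = α * t + β := by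
  by_cases has : a < s
  · have hbs : b ≤ s := not_lt.1 fun h => hs ⟨has, h⟩
    refine ⟨p, q, fun t ht => max_eq_left ?_⟩
    have := mul_nonneg hk.le (show 0 ≤ s - t by linarith [ht.2])
    linarith [hdiff t]
  · refine ⟨p', q', fun t ht => max_eq_right ?_⟩
    have := mul_nonneg hk.le (show 0 ≤ t - s by linarith [ht.1])
    linarith [hdiff t]

lemma min_affine (p q p' q' k s a b : ℝ) (hk : 0 < k)
    (hdiff : ∀ t, (p * t + q) - (p' * t + q') = k * (t - s)) (hs : ¬(a < s ∧ s < b)) :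
    ∃ α β : ℝ, ∀ t ∈ Set.Icc a b, min (p * t + q) (p' * t + q') = α * t + β := by
  obtain ⟨α, β, h⟩ := max_affine (-p) (-q) (-p') (-q') k s a b hk
    (fun t => by linarith [hdiff t]) hs
  refine ⟨-α, -β, fun t ht => ?_⟩
  have h1 := h t ht
  rw [show -p * t + -q = -(p * t + q) by ring, show -p' * t + -q' = -(p' * t + q') by ring,
    max_neg_neg] at h1
  linarith

/-- The separation function `d(t) = x̌_i(t) − x̂_{i+1}(t)` between
the leader's lower-bound trajectory and the follower's upper-bound trajectory
is affine between consecutive critical times: for any `a < b` in the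
critical-time set `T̃` with no element of `T̃` strictly between them, there
exist `α, β` with `d(t) = α·t + β` on `[a, b]`. -/
theorem separation_affine_between_critical_times
    (m : ℕ) (hm : 1 ≤ m) (l vmin vmax τ : ℕ → ℝ)
    (hl : ∀ j < m, 0 < l j)
    (hvmin : ∀ j < m, 0 < vmin j) (hvv : ∀ j < m, vmin j < vmax j)
    (hτ : ∀ j < m, 0 < τ j)
    (hlo : ∀ j < m, vmin j * τ j ≤ l j) (hhi : ∀ j < m, l j ≤ vmax j * τ j)
    (te Δt : ℝ) (hΔt0 : 0 ≤ Δt) (hΔt1 : Δt ≤ ∑ j ∈ Finset.range m, τ j)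
    (L Ti Tf : ℕ → ℝ)
    (hL : ∀ j, L j = ∑ ℓ ∈ Finset.range j, l ℓ)
    (hTi : ∀ j, Ti j = te + ∑ ℓ ∈ Finset.range j, τ ℓ)
    (hTf : ∀ j, Tf j = (te + Δt) + ∑ ℓ ∈ Finset.range j, τ ℓ)
    -- leader's lower-bound trajectory and follower's upper-bound trajectory
    (xcheck xhat : ℝ → ℝ)
    (hxcheck : ∀ j < m, ∀ t ∈ Set.Icc (Ti j) (Ti (j + 1)),
      xcheck t = max (L j + vmin j * (t - Ti j)) (L (j + 1) - vmax j * (Ti (j + 1) - t)))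
    (hxhat : ∀ j < m, ∀ t ∈ Set.Icc (Tf j) (Tf (j + 1)),
      xhat t = min (L j + vmax j * (t - Tf j)) (L (j + 1) - vmin j * (Tf (j + 1) - t)))
    -- the separation function
    (d : ℝ → ℝ)
    (hd : ∀ t ∈ Set.Icc (Tf 0) (Ti m), d t = xcheck t - xhat t)
    -- critical-time set
    (Ttil : Set ℝ)
    (hTtil : Ttil =
      {t : ℝ |
        (∃ j ≤ m, t = Ti j) ∨
        (∃ j < m, t = Ti j + (vmax j * τ j - l j) / (vmax j - vmin j)) ∨
        (∃ j ≤ m, t = Tf j) ∨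
        (∃ j < m, t = Tf j + (l j - vmin j * τ j) / (vmax j - vmin j))}
      ∩ Set.Icc (Tf 0) (Ti m)) :
    ∀ a ∈ Ttil, ∀ b ∈ Ttil, a < b →
      (∀ c ∈ Ttil, ¬(a < c ∧ c < b)) →
      ∃ α β : ℝ, ∀ t ∈ Set.Icc a b, d t = α * t + β := by
  subst hTtil
  rintro a ⟨-, ha⟩ b ⟨-, hb⟩ hab hgap
  have hin : ∀ c, a < c ∧ c < b → c ∈ Set.Icc (Tf 0) (Ti m) := fun c hc =>
    ⟨ha.1.trans hc.1.le, hc.2.le.trans hb.2⟩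
  have h0 : Ti 0 ≤ Tf 0 := by rw [hTi, hTf]; linarith
  have hmm : Ti m ≤ Tf m := by rw [hTi, hTf]; linarith
  have hLs : ∀ j, L (j + 1) = L j + l j := fun j => by
    rw [hL, hL, Finset.sum_range_succ]
  have hTis : ∀ j, Ti (j + 1) = Ti j + τ j := fun j => by
    rw [hTi, hTi, Finset.sum_range_succ]; ring
  have hTfs : ∀ j, Tf (j + 1) = Tf j + τ j := fun j => by
    rw [hTf, hTf, Finset.sum_range_succ]; ring
  obtain ⟨j, hj, hja, hjb⟩ := exists_section_s16 Ti m a b (h0.trans ha.1) (hab.trans_le hb.2)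
    (fun j hj hc => hgap _ ⟨Or.inl ⟨j, hj, rfl⟩, hin _ hc⟩ hc)
  obtain ⟨i, hi, hia, hib⟩ := exists_section_s16 Tf m a b ha.1 ((hab.trans_le hb.2).trans_le hmm)
    (fun j hj hc => hgap _ ⟨Or.inr (Or.inr (Or.inl ⟨j, hj, rfl⟩)), hin _ hc⟩ hc)
  have hkj : 0 < vmax j - vmin j := sub_pos.2 (hvv j hj)
  have hki : 0 < vmax i - vmin i := sub_pos.2 (hvv i hi)
  obtain ⟨α, β, h1⟩ := max_affine (vmin j) (L j - vmin j * Ti j) (vmax j)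
    (L (j + 1) - vmax j * Ti (j + 1)) (vmax j - vmin j)
    (Ti j + (vmax j * τ j - l j) / (vmax j - vmin j)) a b hkj
    (fun t => by
      rw [hLs, hTis]
      field_simp
      ring)
    (fun hc => hgap _ ⟨Or.inr (Or.inl ⟨j, hj, rfl⟩), hin _ hc⟩ hc)
  obtain ⟨α', β', h2⟩ := min_affine (vmax i) (L i - vmax i * Tf i) (vmin i)
    (L (i + 1) - vmin i * Tf (i + 1)) (vmax i - vmin i)
    (Tf i + (l i - vmin i * τ i) / (vmax i - vmin i)) a b hki
    (fun t => by
      rw [hLs, hTfs]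
      field_simp
      ring)
    (fun hc => hgap _ ⟨Or.inr (Or.inr (Or.inr ⟨i, hi, rfl⟩)), hin _ hc⟩ hc)
  refine ⟨α - α', β - β', fun t ht => ?_⟩
  rw [hd t ⟨ha.1.trans ht.1, ht.2.trans hb.2⟩,
    hxcheck j hj t ⟨hja.trans ht.1, ht.2.trans hjb⟩,
    hxhat i hi t ⟨hia.trans ht.1, ht.2.trans hib⟩]
  have e1 := h1 t ht
  have e2 := h2 t ht
  rw [show L j + vmin j * (t - Ti j) = vmin j * t + (L j - vmin j * Ti j) by ring,
    show L (j + 1) - vmax j * (Ti (j + 1) - t)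
      = vmax j * t + (L (j + 1) - vmax j * Ti (j + 1)) by ring,
    show L i + vmax i * (t - Tf i) = vmax i * t + (L i - vmax i * Tf i) by ring,
    show L (i + 1) - vmin i * (Tf (i + 1) - t)
      = vmin i * t + (L (i + 1) - vmin i * Tf (i + 1)) by ring, e1, e2]
  ring
end
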